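/- Let γ_A, γ_B1, γ_B2, ε_B1, ε_B2 ∈ [0,1] and g ∈ ℝ, and suppose all of the following hold: (A) p_ℓ ≤ γ_A and r_ℓ ≤ γ_A for each ℓ ∈ {0,1}; (B1) |p_ℓ − r_ℓ| ≤ γ_B1 for each ℓ ∈ {0,1}, and the diagonals are ε_B1-close on each slice, i.e., |P(Y | V ∩ V̂ᶜ ∩ L_ℓ) − P(Y | Vᶜ ∩ V̂ ∩ L_ℓ)| ≤ ε_B1 for each ℓ ∈ {0,1}; (B2) |p₀ − p₁| ≤ γ_B2 and |r₀ − r₁| ≤ γ_B2, and model closeness holds with gap g and error ε_B2, i.e., for each (a,b) ∈ {(1,1),(1,0),(0,1)}: |P(Y | Vᵃ ∩ V̂ᵇ ∩ L₁) − P(Y | Vᵃ ∩ V̂ᵇ ∩ L₀) − g| ≤ ε_B2. Then |G − Ĝ| ≤ 2 · min(γ_A, γ_B1, γ_B2) + ε_B2 · (2γ_A + γ_B1) + ε_B1 · γ_B2. -/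

import Mathlib

open MeasureTheory

/-- Conditional probability `P(A | B) = μ(A ∩ B) / μ(B)` as a real number. -/
noncomputable def condP {Ω : Type*} [MeasurableSpace Ω] (μ : Measure Ω) (A B : Set Ω) : ℝ :=
  (μ (A ∩ B)).toReal / (μ B).toReal

/-- `ev S true = S` (the event `s = 1`) and `ev S false = Sᶜ` (the event `s = 0`). -/
def ev {Ω : Type*} (S : Set Ω) (b : Bool) : Set Ω := bif b then S else Sᶜ

lemma condP_nonneg_aux {Ω : Type*} [MeasurableSpace Ω] (μ : Measure Ω) (A B : Set Ω) :
    0 ≤ condP μ A B := by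
  unfold condP; positivity

lemma condP_le_one_aux {Ω : Type*} [MeasurableSpace Ω] (μ : Measure Ω) [IsProbabilityMeasure μ]
    (A B : Set Ω) : condP μ A B ≤ 1 := by
  unfold condP
  apply div_le_one_of_le₀ _ ENNReal.toReal_nonneg
  exact ENNReal.toReal_mono (measure_ne_top μ _) (measure_mono Set.inter_subset_right)

lemma condP_split_aux {Ω : Type*} [MeasurableSpace Ω] (μ : Measure Ω) [IsProbabilityMeasure μ]
    (A B S : Set Ω) (hS : MeasurableSet S) (h1 : 0 < μ (B ∩ S)) (h2 : 0 < μ (B ∩ Sᶜ)) :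
    condP μ A B = (1 - condP μ Sᶜ B) * condP μ A (B ∩ S) + condP μ Sᶜ B * condP μ A (B ∩ Sᶜ) := by
  unfold condP
  have e1 : (μ B).toReal = (μ (B ∩ S)).toReal + (μ (B ∩ Sᶜ)).toReal := by
    rw [← ENNReal.toReal_add (measure_ne_top μ _) (measure_ne_top μ _), ← Set.diff_eq,
      measure_inter_add_diff B hS]
  have e2 : (μ (A ∩ B)).toReal = (μ (A ∩ (B ∩ S))).toReal + (μ (A ∩ (B ∩ Sᶜ))).toReal := by
    rw [← ENNReal.toReal_add (measure_ne_top μ _) (measure_ne_top μ _), ← Set.inter_assoc,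
      ← Set.inter_assoc, ← Set.diff_eq, measure_inter_add_diff (A ∩ B) hS]
  have p1 := ENNReal.toReal_pos h1.ne' (measure_ne_top μ _)
  have p2 := ENNReal.toReal_pos h2.ne' (measure_ne_top μ _)
  rw [Set.inter_comm Sᶜ B, e1, e2]
  field_simp
  ring

lemma slice_aux {a b c p r m u : ℝ} (ha : |a| ≤ u) (hb : |b| ≤ u) (hc : |c| ≤ u)
    (hp : 0 ≤ p) (hr : 0 ≤ r) (hpm : p ≤ m) (hrm : r ≤ m) :
    |(p - r) * a + r * b - p * c| ≤ 2 * m * u := by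
  have hu : 0 ≤ u := (abs_nonneg a).trans ha
  rw [abs_le] at *
  rcases le_total p r with h | h
  · constructor <;> nlinarith [mul_le_mul_of_nonneg_right hrm hu]
  · constructor <;> nlinarith [mul_le_mul_of_nonneg_right hpm hu]

lemma real_aux {a0 a1 b0 b1 c0 c1 p0 p1 r0 r1 A B1 B2 e1 e2 g : ℝ}
    (ha0 : 0 ≤ a0 ∧ a0 ≤ 1) (ha1 : 0 ≤ a1 ∧ a1 ≤ 1) (hb0 : 0 ≤ b0 ∧ b0 ≤ 1)
    (hb1 : 0 ≤ b1 ∧ b1 ≤ 1) (hc0 : 0 ≤ c0 ∧ c0 ≤ 1) (hc1 : 0 ≤ c1 ∧ c1 ≤ 1)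
    (hp0 : 0 ≤ p0) (hp1 : 0 ≤ p1) (hr0 : 0 ≤ r0) (hr1 : 0 ≤ r1)
    (hp0A : p0 ≤ A) (hp1A : p1 ≤ A) (hr0A : r0 ≤ A) (hr1A : r1 ≤ A)
    (hB1 : 0 ≤ B1) (hB2 : 0 ≤ B2) (he1 : 0 ≤ e1) (he2 : 0 ≤ e2)
    (h0 : |p0 - r0| ≤ B1) (h1 : |p1 - r1| ≤ B1)
    (hd0 : |b0 - c0| ≤ e1)
    (hp : |p0 - p1| ≤ B2) (hr : |r0 - r1| ≤ B2)
    (ga : |a1 - a0 - g| ≤ e2) (gb : |b1 - b0 - g| ≤ e2) (gc : |c1 - c0 - g| ≤ e2) :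
    |(((1 - r1) * a1 + r1 * b1) - ((1 - r0) * a0 + r0 * b0))
      - (((1 - p1) * a1 + p1 * c1) - ((1 - p0) * a0 + p0 * c0))|
      ≤ 2 * min A (min B1 B2) + e2 * (2 * A + B1) + e1 * B2 := by
  have hA : 0 ≤ A := hp0.trans hp0A
  have n1 := mul_nonneg he2 hA
  have n2 := mul_nonneg he2 hB1
  have n3 := mul_nonneg he1 hB2
  have half : ∀ x : ℝ, 0 ≤ x ∧ x ≤ 1 → |x - 1 / 2| ≤ 1 / 2 := fun x hx => by
    rw [abs_le]; constructor <;> linarith [hx.1, hx.2]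
  have prod : ∀ x y s t : ℝ, |x| ≤ s → |y| ≤ t → |x * y| ≤ s * t := fun x y s t hx hy => by
    rw [abs_mul]; exact mul_le_mul hx hy (abs_nonneg _) ((abs_nonneg _).trans hx)
  have d1 : ∀ x y : ℝ, 0 ≤ x ∧ x ≤ 1 → 0 ≤ y ∧ y ≤ 1 → |x - y| ≤ 1 := fun x y hx hy => by
    rw [abs_le]; constructor <;> linarith [hx.1, hx.2, hy.1, hy.2]
  rcases min_choice A (min B1 B2) with h | h
  · rw [h]
    have s0 := abs_le.1 (slice_aux (half _ ha0) (half _ hb0) (half _ hc0) hp0 hr0 hp0A hr0A)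
    have s1 := abs_le.1 (slice_aux (half _ ha1) (half _ hb1) (half _ hc1) hp1 hr1 hp1A hr1A)
    rw [abs_le]; constructor <;> linarith [s0.1, s0.2, s1.1, s1.2]
  rw [h]
  rcases min_choice B1 B2 with h | h
  · rw [h]
    have q1 := abs_le.1 (prod _ _ _ _ h1 (d1 a1 c1 ha1 hc1))
    have q0 := abs_le.1 (prod _ _ _ _ h0 (d1 a0 c0 ha0 hc0))
    have q2 := abs_le.1 (prod _ _ _ _ hr hd0)
    have hbc : |(b1 - b0 - g) - (c1 - c0 - g)| ≤ 2 * e2 := by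
      rw [abs_le] at *; constructor <;> linarith [gb.1, gb.2, gc.1, gc.2]
    have q3 := abs_le.1 (prod _ _ _ _ ((abs_of_nonneg hr1).le.trans hr1A) hbc)
    rw [abs_le]; constructor <;> linarith [q0.1, q0.2, q1.1, q1.2, q2.1, q2.2, q3.1, q3.2]
  · rw [h]
    have s := abs_le.1 (slice_aux ga gb gc hp1 hr1 hp1A hr1A)
    have q1 := abs_le.1 (prod _ _ _ _ hr (d1 b0 a0 hb0 ha0))
    have q0 := abs_le.1 (prod _ _ _ _ hp (d1 c0 a0 hc0 ha0))
    rw [abs_le]; constructor <;> linarith [q0.1, q0.2, q1.1, q1.2, s.1, s.2]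

/-- Combined refined bound: under conditions (A), (B1) and (B2),
`|G - Ĝ| ≤ 2 min(γ_A, γ_B1, γ_B2) + ε_B2 (2 γ_A + γ_B1) + ε_B1 γ_B2`. -/
theorem stmt_12 {Ω : Type*} [MeasurableSpace Ω] (μ : Measure Ω) [IsProbabilityMeasure μ]
    (Y V Vh : Set Ω) (L : Bool → Set Ω) (γA γB1 γB2 εB1 εB2 g : ℝ)
    (hY : MeasurableSet Y) (hV : MeasurableSet V) (hVh : MeasurableSet Vh)
    (hL : ∀ l, MeasurableSet (L l))
    (hγA : γA ∈ Set.Icc (0 : ℝ) 1)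
    (hγB1 : γB1 ∈ Set.Icc (0 : ℝ) 1) (hγB2 : γB2 ∈ Set.Icc (0 : ℝ) 1)
    (hεB1 : εB1 ∈ Set.Icc (0 : ℝ) 1) (hεB2 : εB2 ∈ Set.Icc (0 : ℝ) 1)
    (hposVL : ∀ l, 0 < μ (V ∩ L l))
    (hposVhL : ∀ l, 0 < μ (Vh ∩ L l))
    (hposCells : ∀ (l a b : Bool), (a, b) ≠ (false, false) →
      0 < μ (ev V a ∩ ev Vh b ∩ L l))
    (hA_prec : ∀ l : Bool, condP μ Vᶜ (Vh ∩ L l) ≤ γA)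
    (hA_rec : ∀ l : Bool, condP μ Vhᶜ (V ∩ L l) ≤ γA)
    (hB1_pr : ∀ l : Bool,
      |condP μ Vᶜ (Vh ∩ L l) - condP μ Vhᶜ (V ∩ L l)| ≤ γB1)
    (hB1_diag : ∀ l : Bool,
      |condP μ Y (V ∩ Vhᶜ ∩ L l) - condP μ Y (Vᶜ ∩ Vh ∩ L l)| ≤ εB1)
    (hB2_prec : |condP μ Vᶜ (Vh ∩ L false) - condP μ Vᶜ (Vh ∩ L true)| ≤ γB2)
    (hB2_rec : |condP μ Vhᶜ (V ∩ L false) - condP μ Vhᶜ (V ∩ L true)| ≤ γB2)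
    (hB2_mc : ∀ a b : Bool, (a, b) ≠ (false, false) →
      |condP μ Y (ev V a ∩ ev Vh b ∩ L true)
        - condP μ Y (ev V a ∩ ev Vh b ∩ L false) - g| ≤ εB2) :
    |(condP μ Y (V ∩ L true) - condP μ Y (V ∩ L false))
      - (condP μ Y (Vh ∩ L true) - condP μ Y (Vh ∩ L false))|
      ≤ 2 * min γA (min γB1 γB2) + εB2 * (2 * γA + γB1) + εB1 * γB2 := by
  have cT : ∀ l, 0 < μ (V ∩ L l ∩ Vh) ∧ 0 < μ (V ∩ L l ∩ Vhᶜ) ∧ 0 < μ (Vh ∩ L l ∩ V) ∧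
      0 < μ (Vh ∩ L l ∩ Vᶜ) := fun l => by
    have x1 := hposCells l true true (by simp)
    have x2 := hposCells l true false (by simp)
    have x3 := hposCells l false true (by simp)
    simp only [ev, cond_true, cond_false] at x1 x2 x3
    refine ⟨?_, ?_, ?_, ?_⟩
    · rwa [Set.inter_right_comm]
    · rwa [Set.inter_right_comm]
    · rwa [Set.inter_right_comm, Set.inter_comm Vh V]
    · rwa [Set.inter_right_comm, Set.inter_comm Vh Vᶜ]
  have sV : ∀ l, condP μ Y (V ∩ L l) = (1 - condP μ Vhᶜ (V ∩ L l)) * condP μ Y (V ∩ Vh ∩ L l)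
      + condP μ Vhᶜ (V ∩ L l) * condP μ Y (V ∩ Vhᶜ ∩ L l) := fun l => by
    have := condP_split_aux μ Y (V ∩ L l) Vh hVh (cT l).1 (cT l).2.1
    rwa [Set.inter_right_comm V (L l) Vh, Set.inter_right_comm V (L l) Vhᶜ] at this
  have sVh : ∀ l, condP μ Y (Vh ∩ L l) = (1 - condP μ Vᶜ (Vh ∩ L l)) * condP μ Y (V ∩ Vh ∩ L l)
      + condP μ Vᶜ (Vh ∩ L l) * condP μ Y (Vᶜ ∩ Vh ∩ L l) := fun l => by
    have := condP_split_aux μ Y (Vh ∩ L l) V hV (cT l).2.2.1 (cT l).2.2.2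
    rwa [Set.inter_right_comm Vh (L l) V, Set.inter_right_comm Vh (L l) Vᶜ,
      Set.inter_comm Vh V, Set.inter_comm Vh Vᶜ] at this
  have m1 := hB2_mc true true (by simp)
  have m2 := hB2_mc true false (by simp)
  have m3 := hB2_mc false true (by simp)
  simp only [ev, cond_true, cond_false] at m1 m2 m3
  have bd : ∀ A B : Set Ω, 0 ≤ condP μ A B ∧ condP μ A B ≤ 1 :=
    fun A B => ⟨condP_nonneg_aux μ A B, condP_le_one_aux μ A B⟩
  rw [sV true, sV false, sVh true, sVh false]
  exact real_aux (bd _ _) (bd _ _) (bd _ _) (bd _ _) (bd _ _) (bd _ _) (bd _ _).1 (bd _ _).1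
    (bd _ _).1 (bd _ _).1 (hA_prec _) (hA_prec _) (hA_rec _) (hA_rec _) hγB1.1 hγB2.1 hεB1.1
    hεB2.1 (hB1_pr _) (hB1_pr _) (hB1_diag _) hB2_prec hB2_rec m1 m2 m3
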